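/- arXiv:2408.02506 — 3 statements merged into one kernel-verified Lean document; each statement's English description precedes it below -/
import Mathlib

section
/- Choi characterization of the A-to-B non-signalling condition: let A₀, B₀, A₁, B₁ be finite nonempty types and N : Matrix ((A₀ × B₀)) ((A₀ × B₀)) ℂ →ₗ[ℂ] Matrix ((A₁ × B₁)) ((A₁ × B₁)) ℂ a ℂ-linear map with Choi matrix J^N. Then N is non-signalling from A to B (i.e. R_{A₁} ∘ N = R_{A₁} ∘ N ∘ R_{A₀}) if and only if, viewing J^N as indexed by A₀ × A₁ × B₀ × B₁, one has Tr_{A₁} J^N = π_{A₀} ⊗ Tr_{A₀ A₁} J^N (an identity of matrices indexed by A₀ × B₀ × B₁). -/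
open Matrix
open scoped ComplexOrder

noncomputable section

/-- Loewner order on complex matrices: `M ≤ N` iff `N - M` is positive semidefinite. -/
def LoewnerLE {n : Type*} [Fintype n] (M N : Matrix n n ℂ) : Prop := (N - M).PosSemidef

/-- `π_S ⊗ X`, the maximally mixed state on `S` tensored with `X`. -/
def piFst {S T : Type*} [Fintype S] [DecidableEq S] (X : Matrix T T ℂ) :
    Matrix (S × T) (S × T) ℂ :=
  fun x y => ((Fintype.card S : ℂ))⁻¹ * (if x.1 = y.1 then 1 else 0) * X x.2 y.2

/-- `I_S ⊗ X`, the identity on `S` tensored with `X`. -/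
def idFst {S T : Type*} [DecidableEq S] (X : Matrix T T ℂ) :
    Matrix (S × T) (S × T) ℂ :=
  fun x y => (if x.1 = y.1 then 1 else 0) * X x.2 y.2

/-- Partial trace over the second tensor factor. -/
def trOut {S T : Type*} [Fintype T] (X : Matrix (S × T) (S × T) ℂ) : Matrix S S ℂ :=
  fun s s' => ∑ t : T, X (s, t) (s', t)

/-- Partial trace over the first tensor factor. -/
def trInp {S T : Type*} [Fintype S] (X : Matrix (S × T) (S × T) ℂ) : Matrix T T ℂ :=
  fun t t' => ∑ s : S, X (s, t) (s, t')

section FourSystems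

variable {A₀ A₁ B₀ B₁ : Type*} [Fintype A₀] [Fintype A₁] [Fintype B₀] [Fintype B₁]
  [DecidableEq A₀] [DecidableEq A₁] [DecidableEq B₀] [DecidableEq B₁]

/-- `Tr_{A₁}` of a matrix on `A₀ × A₁ × B₀ × B₁`. -/
def trA1 (J : Matrix (A₀ × A₁ × B₀ × B₁) (A₀ × A₁ × B₀ × B₁) ℂ) :
    Matrix (A₀ × B₀ × B₁) (A₀ × B₀ × B₁) ℂ :=
  fun x y => ∑ a : A₁, J (x.1, a, x.2) (y.1, a, y.2)

/-- `Tr_{B₁}` of a matrix on `A₀ × A₁ × B₀ × B₁`. -/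
def trB1 (J : Matrix (A₀ × A₁ × B₀ × B₁) (A₀ × A₁ × B₀ × B₁) ℂ) :
    Matrix (A₀ × A₁ × B₀) (A₀ × A₁ × B₀) ℂ :=
  fun x y => ∑ b : B₁, J (x.1, x.2.1, x.2.2, b) (y.1, y.2.1, y.2.2, b)

/-- `Tr_{A₀A₁}` of a matrix on `A₀ × A₁ × B₀ × B₁`. -/
def trA0A1 (J : Matrix (A₀ × A₁ × B₀ × B₁) (A₀ × A₁ × B₀ × B₁) ℂ) :
    Matrix (B₀ × B₁) (B₀ × B₁) ℂ :=
  fun x y => ∑ a₀ : A₀, ∑ a₁ : A₁, J (a₀, a₁, x) (a₀, a₁, y)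

/-- `Tr_{B₀B₁}` of a matrix on `A₀ × A₁ × B₀ × B₁`. -/
def trB0B1 (J : Matrix (A₀ × A₁ × B₀ × B₁) (A₀ × A₁ × B₀ × B₁) ℂ) :
    Matrix (A₀ × A₁) (A₀ × A₁) ℂ :=
  fun x y => ∑ b₀ : B₀, ∑ b₁ : B₁, J (x.1, x.2, b₀, b₁) (y.1, y.2, b₀, b₁)

/-- `Tr_{A₁B₁}` of a matrix on `A₀ × A₁ × B₀ × B₁`. -/
def trA1B1 (J : Matrix (A₀ × A₁ × B₀ × B₁) (A₀ × A₁ × B₀ × B₁) ℂ) :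
    Matrix (A₀ × B₀) (A₀ × B₀) ℂ :=
  fun x y => ∑ a₁ : A₁, ∑ b₁ : B₁, J (x.1, a₁, x.2, b₁) (y.1, a₁, y.2, b₁)

/-- `π_{B₀} ⊗ Y`, reindexed to `A₀ × A₁ × B₀` with the subsystems in this order. -/
def piB0 (Y : Matrix (A₀ × A₁) (A₀ × A₁) ℂ) :
    Matrix (A₀ × A₁ × B₀) (A₀ × A₁ × B₀) ℂ :=
  fun x y => ((Fintype.card B₀ : ℂ))⁻¹ * (if x.2.2 = y.2.2 then 1 else 0) *
    Y (x.1, x.2.1) (y.1, y.2.1)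

/-- The non-signalling conditions for a Choi matrix on `A₀ × A₁ × B₀ × B₁`:
`Tr_{A₁} J = π_{A₀} ⊗ Tr_{A₀A₁} J` and `Tr_{B₁} J = π_{B₀} ⊗ Tr_{B₀B₁} J`. -/
def NS (J : Matrix (A₀ × A₁ × B₀ × B₁) (A₀ × A₁ × B₀ × B₁) ℂ) : Prop :=
  trA1 J = piFst (trA0A1 J) ∧ trB1 J = piB0 (trB0B1 J)

/-- The optimal value `Λ(J)` of the SDP whose logarithm is the max-relative entropy of
bidirectional classical communication of the bipartite channel with Choi matrix `J`. -/
def Lam (J : Matrix (A₀ × A₁ × B₀ × B₁) (A₀ × A₁ × B₀ × B₁) ℂ) : ℝ :=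
  sInf {l : ℝ | ∃ Y : Matrix (A₀ × A₁ × B₀ × B₁) (A₀ × A₁ × B₀ × B₁) ℂ,
    LoewnerLE J Y ∧ trA1B1 Y = l • (1 : Matrix (A₀ × B₀) (A₀ × B₀) ℂ) ∧ NS Y}

end FourSystems

/-- Replacement map on the first tensor factor: `X ↦ π_S ⊗ Tr_S X`. -/
def replFst {S T : Type*} [Fintype S] [Fintype T] [DecidableEq S]
    (X : Matrix (S × T) (S × T) ℂ) : Matrix (S × T) (S × T) ℂ :=
  fun x y => ((Fintype.card S : ℂ))⁻¹ * (if x.1 = y.1 then 1 else 0) *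
    ∑ s : S, X (s, x.2) (s, y.2)

/-- The Choi matrix of a linear map `N : Matrix (A₀ × B₀) → Matrix (A₁ × B₁)`,
`J^N((a₀,b₀),(a₁,b₁)),((a₀',b₀'),(a₁',b₁')) = N(E_{(a₀,b₀),(a₀',b₀')})((a₁,b₁),(a₁',b₁'))`,
reindexed to `A₀ × A₁ × B₀ × B₁`. -/
def choi {A₀ B₀ A₁ B₁ : Type*} [Fintype A₀] [Fintype B₀] [DecidableEq A₀] [DecidableEq B₀]
    (N : Matrix (A₀ × B₀) (A₀ × B₀) ℂ →ₗ[ℂ] Matrix (A₁ × B₁) (A₁ × B₁) ℂ) :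
    Matrix (A₀ × A₁ × B₀ × B₁) (A₀ × A₁ × B₀ × B₁) ℂ :=
  fun x y =>
    N (Matrix.single (x.1, x.2.2.1) (y.1, y.2.2.1) 1) (x.2.1, x.2.2.2) (y.2.1, y.2.2.2)

/-!
Since `π_S ⊗ ·` is injective for nonempty `S`, the map `N` is non-signalling from `A` to `B` iff the
reduced map `L = Tr_{A₁} ∘ N` satisfies `L = L ∘ R_{A₀}`. A linear map is determined by its Choi
matrix, and evaluating on matrix units shows `J^{L ∘ R_{A₀}} = π_{A₀} ⊗ Tr_{A₀} J^L`. It remains to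
note that `J^L = Tr_{A₁} J^N`.
-/

section PartialTrace

variable {S T : Type*} [Fintype S]

variable (S T) in
/-- The partial trace `Tr_S` as a linear map, so that it can be composed with other linear maps. -/
def trInpLinearMap : Matrix (S × T) (S × T) ℂ →ₗ[ℂ] Matrix T T ℂ where
  toFun := trInp
  map_add' X Y := by
    ext t t'
    simp only [trInp, Matrix.add_apply, Finset.sum_add_distrib]
  map_smul' c X := by
    ext t t'
    simp only [trInp, Matrix.smul_apply, Finset.smul_sum, RingHom.id_apply]

lemma trInp_single [DecidableEq S] [DecidableEq T] (s s' : S) (t t' : T) (z : ℂ) :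
    trInp (single (s, t) (s', t') z) = if s = s' then single t t' z else 0 := by
  ext u u'
  split_ifs with h
  · subst h
    simp [trInp, single_apply, ite_and]
  · refine Finset.sum_eq_zero fun r _ => single_apply_of_ne _ _ _ _ _ ?_
    simp only [Prod.mk.injEq]
    rintro ⟨⟨rfl, -⟩, rfl, -⟩
    exact h rfl

end PartialTrace

section Replacement

variable {S T : Type*} [Fintype S] [DecidableEq S]

lemma piFst_injective [Nonempty S] :
    Function.Injective (piFst : Matrix T T ℂ → Matrix (S × T) (S × T) ℂ) := by
  intro X Y h
  obtain ⟨s⟩ := ‹Nonempty S›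
  ext t t'
  simpa [piFst] using congr_fun₂ h (s, t) (s, t')

variable (S T) in
/-- The map `X ↦ π_S ⊗ X` as a linear map, so that it can be composed with other linear maps. -/
def piFstLinearMap : Matrix T T ℂ →ₗ[ℂ] Matrix (S × T) (S × T) ℂ where
  toFun := piFst
  map_add' X Y := by
    ext x y
    simp only [piFst, Matrix.add_apply, mul_add]
  map_smul' c X := by
    ext x y
    simp only [piFst, Matrix.smul_apply, mul_smul_comm, RingHom.id_apply]

lemma piFst_single [DecidableEq T] (t t' : T) (z : ℂ) :
    piFst (single t t' z) = (Fintype.card S : ℂ)⁻¹ • ∑ s : S, single (s, t) (s, t') z := by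
  ext ⟨s, u⟩ ⟨s', u'⟩
  by_cases h : s = s' <;> simp [piFst, single_apply, Matrix.sum_apply, ite_and, h]

variable (S T) in
/-- The replacement map `R_S` as a linear map, factored as the partial trace `Tr_S` followed by
`π_S ⊗ ·`. -/
def replFstLinearMap : Matrix (S × T) (S × T) ℂ →ₗ[ℂ] Matrix (S × T) (S × T) ℂ :=
  piFstLinearMap S T ∘ₗ trInpLinearMap S T

lemma replFstLinearMap_single [DecidableEq T] (s s' : S) (t t' : T) (z : ℂ) :
    replFstLinearMap S T (single (s, t) (s', t') z) =
      if s = s' then (Fintype.card S : ℂ)⁻¹ • ∑ r : S, single (r, t) (r, t') z else 0 := by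
  change piFstLinearMap S T (trInp (single (s, t) (s', t') z)) = _
  rw [trInp_single]
  split_ifs
  · exact piFst_single t t' z
  · exact map_zero _

lemma replFst_eq_piFst_trInp [Fintype T] (X : Matrix (S × T) (S × T) ℂ) :
    replFst X = piFst (trInp X) :=
  rfl

lemma replFst_eq_replFst_iff [Fintype T] [Nonempty S] {X Y : Matrix (S × T) (S × T) ℂ} :
    replFst X = replFst Y ↔ trInp X = trInp Y := by
  rw [replFst_eq_piFst_trInp, replFst_eq_piFst_trInp, piFst_injective.eq_iff]

end Replacement

section InputChoi

variable {A B C : Type*} [DecidableEq A] [DecidableEq B]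

/-- The Choi matrix of a linear map `L` from `A × B` to `C`, reindexed to `A × B × C` so that the
first input system `A` is the outermost tensor factor, on which `trInp` and `piFst` act. -/
def choiBipartiteInput (L : Matrix (A × B) (A × B) ℂ →ₗ[ℂ] Matrix C C ℂ) :
    Matrix (A × B × C) (A × B × C) ℂ :=
  fun x y => L (single (x.1, x.2.1) (y.1, y.2.1) 1) x.2.2 y.2.2

lemma choiBipartiteInput_injective [Finite A] [Finite B] :
    Function.Injective (choiBipartiteInput (A := A) (B := B) (C := C)) := by
  intro L L' h
  refine ext_linearMap ℂ fun ⟨a, b⟩ ⟨a', b'⟩ => LinearMap.ext_ring ?_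
  ext c c'
  exact congr_fun₂ h (a, b, c) (a', b', c')

lemma choiBipartiteInput_comp_replFstLinearMap [Fintype A]
    (L : Matrix (A × B) (A × B) ℂ →ₗ[ℂ] Matrix C C ℂ) :
    choiBipartiteInput (L ∘ₗ replFstLinearMap A B) = piFst (trInp (choiBipartiteInput L)) := by
  ext ⟨a, b, c⟩ ⟨a', b', c'⟩
  change L (replFstLinearMap A B (single (a, b) (a', b') 1)) c c' = _
  rw [replFstLinearMap_single]
  split_ifs with h <;>
    simp [piFst, trInp, choiBipartiteInput, Matrix.sum_apply, h]

end InputChoi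

lemma trA1_choi {A₀ A₁ B₀ B₁ : Type*} [Fintype A₀] [Fintype A₁] [Fintype B₀]
    [DecidableEq A₀] [DecidableEq B₀]
    (N : Matrix (A₀ × B₀) (A₀ × B₀) ℂ →ₗ[ℂ] Matrix (A₁ × B₁) (A₁ × B₁) ℂ) :
    trA1 (choi N) = choiBipartiteInput (trInpLinearMap A₁ B₁ ∘ₗ N) :=
  rfl

lemma trInp_trA1 {A₀ A₁ B₀ B₁ : Type*} [Fintype A₀] [Fintype A₁]
    (J : Matrix (A₀ × A₁ × B₀ × B₁) (A₀ × A₁ × B₀ × B₁) ℂ) :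
    trInp (trA1 J) = trA0A1 J :=
  rfl

/-- Choi characterization of the A-to-B non-signalling condition: a linear map `N` is
non-signalling from Alice to Bob iff its Choi matrix satisfies
`Tr_{A₁} J^N = π_{A₀} ⊗ Tr_{A₀A₁} J^N`. -/
theorem ns_A_to_B_iff_choi
    {A₀ B₀ A₁ B₁ : Type*}
    [Fintype A₀] [Fintype B₀] [Fintype A₁] [Fintype B₁]
    [DecidableEq A₀] [DecidableEq B₀] [DecidableEq A₁] [DecidableEq B₁]
    [Nonempty A₀] [Nonempty B₀] [Nonempty A₁] [Nonempty B₁]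
    (N : Matrix (A₀ × B₀) (A₀ × B₀) ℂ →ₗ[ℂ] Matrix (A₁ × B₁) (A₁ × B₁) ℂ) :
    (∀ X, replFst (N X) = replFst (N (replFst X))) ↔
      trA1 (choi N) = piFst (trA0A1 (choi N)) := by
  let L := trInpLinearMap A₁ B₁ ∘ₗ N
  calc (∀ X, replFst (N X) = replFst (N (replFst X)))
      ↔ ∀ X, L X = (L ∘ₗ replFstLinearMap A₀ B₀) X := forall_congr' fun _ => replFst_eq_replFst_iff
    _ ↔ L = L ∘ₗ replFstLinearMap A₀ B₀ := LinearMap.ext_iff.symm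
    _ ↔ choiBipartiteInput L = choiBipartiteInput (L ∘ₗ replFstLinearMap A₀ B₀) :=
      choiBipartiteInput_injective.eq_iff.symm
    _ ↔ trA1 (choi N) = piFst (trA0A1 (choi N)) := by
      rw [choiBipartiteInput_comp_replFstLinearMap, ← trInp_trA1, trA1_choi]
end
end

section
/- Subadditivity of the max-relative entropy of bidirectional classical communication: let J₁ (indexed by A₀ × A₁ × B₀ × B₁) and J₂ (indexed by A₀' × A₁' × B₀' × B₁') be Choi matrices of bipartite channels. Then Λ(J₁ ⊠ J₂) ≤ Λ(J₁) · Λ(J₂), where J₁ ⊠ J₂ is the Kronecker product reindexed to (A₀ × A₀') × (A₁ × A₁') × (B₀ × B₀') × (B₁ × B₁'). Equivalently, the max-relative entropy of bidirectional classical communication log Λ is subadditive under tensor products of bipartite channels. -/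
open Matrix
open scoped ComplexOrder

noncomputable section

/-- Kronecker product of two matrices on four-fold systems, reindexed to
`(A₀ × A₀') × (A₁ × A₁') × (B₀ × B₀') × (B₁ × B₁')`. -/
def kron4 {A₀ A₁ B₀ B₁ A₀' A₁' B₀' B₁' : Type*}
    (J₁ : Matrix (A₀ × A₁ × B₀ × B₁) (A₀ × A₁ × B₀ × B₁) ℂ)
    (J₂ : Matrix (A₀' × A₁' × B₀' × B₁') (A₀' × A₁' × B₀' × B₁') ℂ) :
    Matrix ((A₀ × A₀') × (A₁ × A₁') × (B₀ × B₀') × (B₁ × B₁'))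
      ((A₀ × A₀') × (A₁ × A₁') × (B₀ × B₀') × (B₁ × B₁')) ℂ :=
  fun x y =>
    J₁ (x.1.1, x.2.1.1, x.2.2.1.1, x.2.2.2.1) (y.1.1, y.2.1.1, y.2.2.1.1, y.2.2.2.1) *
    J₂ (x.1.2, x.2.1.2, x.2.2.1.2, x.2.2.2.2) (y.1.2, y.2.1.2, y.2.2.1.2, y.2.2.2.2)

/-!
If `Y₁` and `Y₂` are feasible for `J₁` and `J₂` with values `k` and `l`, then `Y₁ ⊠ Y₂` is feasible
for `J₁ ⊠ J₂` with value `k * l`: partial traces and the maps `X ↦ π ⊗ X` factor through Kronecker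
products, and `Y₁ ⊗ Y₂ - J₁ ⊗ J₂ = (Y₁ - J₁) ⊗ Y₂ + J₁ ⊗ (Y₂ - J₂)` is positive semidefinite. As
feasible values are nonnegative, the infimum of the products `k * l` is the product of the infima.
-/

open scoped Kronecker Pointwise

section LoewnerOrder

variable {m n : Type*} [Fintype m] [Fintype n]

lemma LoewnerLE.posSemidef {M N : Matrix n n ℂ} (h : LoewnerLE M N) (hM : M.PosSemidef) :
    N.PosSemidef := by
  simpa using hM.add h

lemma LoewnerLE.submatrix {M N : Matrix n n ℂ} (h : LoewnerLE M N) (f : m → n) :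
    LoewnerLE (M.submatrix f f) (N.submatrix f f) :=
  PosSemidef.submatrix h f

lemma LoewnerLE.kronecker {M N : Matrix m m ℂ} {P Q : Matrix n n ℂ} (hMN : LoewnerLE M N)
    (hPQ : LoewnerLE P Q) (hM : M.PosSemidef) (hP : P.PosSemidef) :
    LoewnerLE (M ⊗ₖ P) (N ⊗ₖ Q) := by
  have split : N ⊗ₖ Q - M ⊗ₖ P = (N - M) ⊗ₖ Q + M ⊗ₖ (Q - P) := by
    ext i j
    simp only [Matrix.sub_apply, Matrix.add_apply, kroneckerMap_apply]
    ring
  rw [LoewnerLE, split]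
  exact (PosSemidef.kronecker hMN (hPQ.posSemidef hP)).add (hM.kronecker hPQ)

open scoped Matrix.Norms.L2Operator MatrixOrder in
lemma exists_loewnerLE_smul_one [DecidableEq n] {M : Matrix n n ℂ} (hM : M.IsHermitian) :
    ∃ c : ℝ, LoewnerLE M (c • 1) := by
  refine ⟨‖M‖, ?_⟩
  have bound : M ≤ algebraMap ℝ _ ‖M‖ := IsSelfAdjoint.le_algebraMap_norm_self hM
  rwa [Matrix.le_iff, Algebra.algebraMap_eq_smul_one] at bound

end LoewnerOrder

lemma le_csInf_mul_csInf {s t : Set ℝ} {a : ℝ} (hs : s.Nonempty) (ht : t.Nonempty)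
    (hs₀ : ∀ x ∈ s, 0 ≤ x) (ht₀ : ∀ y ∈ t, 0 ≤ y) (h : ∀ x ∈ s, ∀ y ∈ t, a ≤ x * y) :
    a ≤ sInf s * sInf t := by
  have le_mul_csInf : ∀ x ∈ s, a ≤ sInf t * x := by
    intro x hx
    rw [mul_comm, ← smul_eq_mul, ← Real.sInf_smul_of_nonneg (hs₀ x hx)]
    refine le_csInf ht.smul_set ?_
    rintro _ ⟨y, hy, rfl⟩
    exact h x hx y hy
  rw [mul_comm, ← smul_eq_mul, ← Real.sInf_smul_of_nonneg (Real.sInf_nonneg ht₀)]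
  refine le_csInf hs.smul_set ?_
  rintro _ ⟨x, hx, rfl⟩
  exact le_mul_csInf x hx

section KroneckerProducts

variable {S T U S' T' U' : Type*}

/-- Kronecker product of two matrices on two-fold systems, reindexed to `(S × S') × (T × T')`. -/
def kron2 (M : Matrix (S × T) (S × T) ℂ) (N : Matrix (S' × T') (S' × T') ℂ) :
    Matrix ((S × S') × (T × T')) ((S × S') × (T × T')) ℂ :=
  fun x y => M (x.1.1, x.2.1) (y.1.1, y.2.1) * N (x.1.2, x.2.2) (y.1.2, y.2.2)

/-- Kronecker product of two matrices on three-fold systems, reindexed to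
`(S × S') × (T × T') × (U × U')`. -/
def kron3 (M : Matrix (S × T × U) (S × T × U) ℂ) (N : Matrix (S' × T' × U') (S' × T' × U') ℂ) :
    Matrix ((S × S') × (T × T') × (U × U')) ((S × S') × (T × T') × (U × U')) ℂ :=
  fun x y => M (x.1.1, x.2.1.1, x.2.2.1) (y.1.1, y.2.1.1, y.2.2.1) *
    N (x.1.2, x.2.1.2, x.2.2.2) (y.1.2, y.2.1.2, y.2.2.2)

lemma kron2_eq_submatrix_kronecker (M : Matrix (S × T) (S × T) ℂ)
    (N : Matrix (S' × T') (S' × T') ℂ) :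
    kron2 M N = (M ⊗ₖ N).submatrix
      (Equiv.prodProdProdComm S S' T T') (Equiv.prodProdProdComm S S' T T') :=
  rfl

lemma kron2_smul_one [DecidableEq S] [DecidableEq T] [DecidableEq S'] [DecidableEq T'] (k l : ℝ) :
    kron2 (k • (1 : Matrix (S × T) (S × T) ℂ)) (l • (1 : Matrix (S' × T') (S' × T') ℂ)) =
      (k * l) • 1 := by
  simp only [kron2_eq_submatrix_kronecker, smul_kronecker, kronecker_smul, one_kronecker_one,
    smul_smul, submatrix_smul, Pi.smul_apply, submatrix_one_equiv, mul_comm l k]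

lemma piFst_kron2 [Fintype U] [Fintype U'] [DecidableEq U] [DecidableEq U']
    (M : Matrix (S × T) (S × T) ℂ) (N : Matrix (S' × T') (S' × T') ℂ) :
    (piFst (kron2 M N) : Matrix ((U × U') × _) ((U × U') × _) ℂ) = kron3 (piFst M) (piFst N) := by
  ext x y
  simp only [piFst, kron2, kron3, Fintype.card_prod, Nat.cast_mul, mul_inv, Prod.ext_iff, ite_and]
  split_ifs <;> ring

lemma piB0_kron2 [Fintype U] [Fintype U'] [DecidableEq U] [DecidableEq U']
    (M : Matrix (S × T) (S × T) ℂ) (N : Matrix (S' × T') (S' × T') ℂ) :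
    piB0 (B₀ := U × U') (kron2 M N) = kron3 (piB0 M) (piB0 N) := by
  ext x y
  simp only [piB0, kron2, kron3, Fintype.card_prod, Nat.cast_mul, mul_inv, Prod.ext_iff, ite_and]
  split_ifs <;> ring

end KroneckerProducts

section BipartiteSystems

variable {A₀ A₁ B₀ B₁ A₀' A₁' B₀' B₁' : Type*}

section PartialTraces

variable (J : Matrix (A₀ × A₁ × B₀ × B₁) (A₀ × A₁ × B₀ × B₁) ℂ)
  (J' : Matrix (A₀' × A₁' × B₀' × B₁') (A₀' × A₁' × B₀' × B₁') ℂ)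

lemma trA1_kron4 [Fintype A₁] [Fintype A₁'] :
    trA1 (kron4 J J') = kron3 (trA1 J) (trA1 J') := by
  ext x y
  simp only [trA1, kron4, kron3, Fintype.sum_prod_type, Finset.sum_mul_sum]

lemma trB1_kron4 [Fintype B₁] [Fintype B₁'] :
    trB1 (kron4 J J') = kron3 (trB1 J) (trB1 J') := by
  ext x y
  simp only [trB1, kron4, kron3, Fintype.sum_prod_type, Finset.sum_mul_sum]

lemma trA0A1_kron4 [Fintype A₀] [Fintype A₁] [Fintype A₀'] [Fintype A₁'] :
    trA0A1 (kron4 J J') = kron2 (trA0A1 J) (trA0A1 J') := by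
  ext x y
  simp only [trA0A1, kron4, kron2, Fintype.sum_prod_type, Finset.sum_mul_sum]

lemma trB0B1_kron4 [Fintype B₀] [Fintype B₁] [Fintype B₀'] [Fintype B₁'] :
    trB0B1 (kron4 J J') = kron2 (trB0B1 J) (trB0B1 J') := by
  ext x y
  simp only [trB0B1, kron4, kron2, Fintype.sum_prod_type, Finset.sum_mul_sum]

lemma trA1B1_kron4 [Fintype A₁] [Fintype B₁] [Fintype A₁'] [Fintype B₁'] :
    trA1B1 (kron4 J J') = kron2 (trA1B1 J) (trA1B1 J') := by
  ext x y
  simp only [trA1B1, kron4, kron2, Fintype.sum_prod_type, Finset.sum_mul_sum]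

lemma trA1B1_smul_one [Fintype A₁] [Fintype B₁] [DecidableEq A₀] [DecidableEq A₁]
    [DecidableEq B₀] [DecidableEq B₁] (c : ℝ) :
    trA1B1 (c • (1 : Matrix (A₀ × A₁ × B₀ × B₁) (A₀ × A₁ × B₀ × B₁) ℂ)) =
      (Fintype.card A₁ * Fintype.card B₁ * c) • 1 := by
  ext x y
  simp [trA1B1, one_apply, Prod.ext_iff, ite_and, mul_assoc]

end PartialTraces

variable {J Y : Matrix (A₀ × A₁ × B₀ × B₁) (A₀ × A₁ × B₀ × B₁) ℂ}
  {J' Y' : Matrix (A₀' × A₁' × B₀' × B₁') (A₀' × A₁' × B₀' × B₁') ℂ}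

lemma trA1B1_apply_self_nonneg [Fintype A₁] [Fintype B₁] (hJ : J.PosSemidef) (x : A₀ × B₀) :
    0 ≤ trA1B1 J x x :=
  Finset.sum_nonneg fun _ _ => Finset.sum_nonneg fun _ _ => hJ.diag_nonneg

lemma kron4_eq_submatrix_kronecker :
    kron4 J J' = (J ⊗ₖ J').submatrix
      (fun x => ((x.1.1, x.2.1.1, x.2.2.1.1, x.2.2.2.1), (x.1.2, x.2.1.2, x.2.2.1.2, x.2.2.2.2)))
      (fun x => ((x.1.1, x.2.1.1, x.2.2.1.1, x.2.2.2.1), (x.1.2, x.2.1.2, x.2.2.1.2, x.2.2.2.2))) :=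
  rfl

lemma kron4_posSemidef [Finite A₀] [Finite A₁] [Finite B₀] [Finite B₁]
    [Finite A₀'] [Finite A₁'] [Finite B₀'] [Finite B₁']
    (hJ : J.PosSemidef) (hJ' : J'.PosSemidef) : (kron4 J J').PosSemidef := by
  rw [kron4_eq_submatrix_kronecker]
  exact (hJ.kronecker hJ').submatrix _

variable [Fintype A₀] [Fintype A₁] [Fintype B₀] [Fintype B₁]
  [Fintype A₀'] [Fintype A₁'] [Fintype B₀'] [Fintype B₁']

lemma LoewnerLE.kron4 (h : LoewnerLE J Y) (h' : LoewnerLE J' Y') (hJ : J.PosSemidef)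
    (hJ' : J'.PosSemidef) : LoewnerLE (kron4 J J') (kron4 Y Y') := by
  simp only [kron4_eq_submatrix_kronecker]
  exact (h.kronecker h' hJ hJ').submatrix _

variable [DecidableEq A₀] [DecidableEq B₀] [DecidableEq A₀'] [DecidableEq B₀']

lemma NS.kron4 (hJ : NS J) (hJ' : NS J') : NS (kron4 J J') := by
  constructor
  · rw [trA1_kron4, trA0A1_kron4, hJ.1, hJ'.1, piFst_kron2]
  · rw [trB1_kron4, trB0B1_kron4, hJ.2, hJ'.2, piB0_kron2]

lemma NS_smul_one [Nonempty A₀] [Nonempty B₀] [DecidableEq A₁] [DecidableEq B₁] (c : ℝ) :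
    NS (c • (1 : Matrix (A₀ × A₁ × B₀ × B₁) (A₀ × A₁ × B₀ × B₁) ℂ)) := by
  constructor
  · ext x y
    by_cases h : x.1 = y.1 <;>
      simp [trA1, piFst, trA0A1, one_apply, Prod.ext_iff, ite_and, h]
  · ext x y
    simp [trB1, piB0, trB0B1, one_apply, Prod.ext_iff, ite_and]

/-- The objective values of the feasible points of the minimization problem defining `Lam J`. -/
def feasibleValues (J : Matrix (A₀ × A₁ × B₀ × B₁) (A₀ × A₁ × B₀ × B₁) ℂ) : Set ℝ :=
  {l | ∃ Y : Matrix (A₀ × A₁ × B₀ × B₁) (A₀ × A₁ × B₀ × B₁) ℂ,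
    LoewnerLE J Y ∧ trA1B1 Y = l • (1 : Matrix (A₀ × B₀) (A₀ × B₀) ℂ) ∧ NS Y}

lemma Lam_eq_sInf_feasibleValues : Lam J = sInf (feasibleValues J) := rfl

lemma feasibleValues_nonempty [Nonempty A₀] [Nonempty B₀] (hJ : J.IsHermitian) :
    (feasibleValues J).Nonempty := by
  classical
  obtain ⟨c, hc⟩ := exists_loewnerLE_smul_one hJ
  exact ⟨_, c • 1, hc, trA1B1_smul_one c, NS_smul_one c⟩

lemma nonneg_of_mem_feasibleValues [Nonempty A₀] [Nonempty B₀] (hJ : J.PosSemidef) {l : ℝ}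
    (hl : l ∈ feasibleValues J) : 0 ≤ l := by
  obtain ⟨Y, hJY, htr, -⟩ := hl
  obtain ⟨x⟩ : Nonempty (A₀ × B₀) := inferInstance
  simpa [htr] using trA1B1_apply_self_nonneg (hJY.posSemidef hJ) x

lemma mul_mem_feasibleValues_kron4 (hJ : J.PosSemidef) (hJ' : J'.PosSemidef) {k l : ℝ}
    (hk : k ∈ feasibleValues J) (hl : l ∈ feasibleValues J') :
    k * l ∈ feasibleValues (kron4 J J') := by
  obtain ⟨Y, hJY, htr, hNS⟩ := hk
  obtain ⟨Y', hJY', htr', hNS'⟩ := hl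
  refine ⟨_, hJY.kron4 hJY' hJ hJ', ?_, hNS.kron4 hNS'⟩
  rw [trA1B1_kron4, htr, htr', kron2_smul_one]

end BipartiteSystems

theorem lam_subadditive_general
    {A₀ A₁ B₀ B₁ A₀' A₁' B₀' B₁' : Type*}
    [Fintype A₀] [Fintype A₁] [Fintype B₀] [Fintype B₁]
    [Fintype A₀'] [Fintype A₁'] [Fintype B₀'] [Fintype B₁']
    [DecidableEq A₀] [DecidableEq B₀] [DecidableEq A₀'] [DecidableEq B₀']
    [Nonempty A₀] [Nonempty B₀] [Nonempty A₀'] [Nonempty B₀']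
    (J₁ : Matrix (A₀ × A₁ × B₀ × B₁) (A₀ × A₁ × B₀ × B₁) ℂ)
    (J₂ : Matrix (A₀' × A₁' × B₀' × B₁') (A₀' × A₁' × B₀' × B₁') ℂ)
    (h₁ : J₁.PosSemidef) (h₂ : J₂.PosSemidef) :
    Lam (kron4 J₁ J₂) ≤ Lam J₁ * Lam J₂ := by
  simp only [Lam_eq_sInf_feasibleValues]
  refine le_csInf_mul_csInf (feasibleValues_nonempty h₁.1) (feasibleValues_nonempty h₂.1)
    (fun _ => nonneg_of_mem_feasibleValues h₁) (fun _ => nonneg_of_mem_feasibleValues h₂) ?_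
  intro k hk l hl
  have bddBelow : BddBelow (feasibleValues (kron4 J₁ J₂)) :=
    ⟨0, fun _ => nonneg_of_mem_feasibleValues (kron4_posSemidef h₁ h₂)⟩
  exact csInf_le bddBelow (mul_mem_feasibleValues_kron4 h₁ h₂ hk hl)

/-- Subadditivity of the max-relative entropy of bidirectional classical communication:
for Choi matrices of bipartite channels, `Λ(J₁ ⊠ J₂) ≤ Λ(J₁) · Λ(J₂)`, i.e. `log Λ` is
subadditive under tensor products. -/
theorem lam_subadditive
    {A₀ A₁ B₀ B₁ A₀' A₁' B₀' B₁' : Type*}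
    [Fintype A₀] [Fintype A₁] [Fintype B₀] [Fintype B₁]
    [Fintype A₀'] [Fintype A₁'] [Fintype B₀'] [Fintype B₁']
    [DecidableEq A₀] [DecidableEq A₁] [DecidableEq B₀] [DecidableEq B₁]
    [DecidableEq A₀'] [DecidableEq A₁'] [DecidableEq B₀'] [DecidableEq B₁']
    [Nonempty A₀] [Nonempty A₁] [Nonempty B₀] [Nonempty B₁]
    [Nonempty A₀'] [Nonempty A₁'] [Nonempty B₀'] [Nonempty B₁']
    (J₁ : Matrix (A₀ × A₁ × B₀ × B₁) (A₀ × A₁ × B₀ × B₁) ℂ)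
    (J₂ : Matrix (A₀' × A₁' × B₀' × B₁') (A₀' × A₁' × B₀' × B₁') ℂ)
    (h₁ : J₁.PosSemidef) (hTP₁ : trA1B1 J₁ = 1)
    (h₂ : J₂.PosSemidef) (hTP₂ : trA1B1 J₂ = 1) :
    Lam (kron4 J₁ J₂) ≤ Lam J₁ * Lam J₂ :=
  lam_subadditive_general J₁ J₂ h₁ h₂
end
end

section
/- The channel E′ used in the one-shot cost lower bound is a non-signalling bipartite channel: let m ≥ 2 and take A₀ = A₁ = B₀ = B₁ = Fin m. Let C_{A₀B₁} = ∑_k E_{kk} ⊗ E_{kk} (indexed by A₀ × B₁, where E_{kk} is a matrix unit), define C_{B₀A₁} analogously, and set J′ = (1/m) • (C_{A₀B₁} ⊠ C_{B₀A₁}) + (1/(m(m−1))) • ((I − C)_{A₀B₁} ⊠ (I − C)_{B₀A₁}), a matrix indexed by A₀ × A₁ × B₀ × B₁ (with the natural reindexing). Then J′ is positive semidefinite, Tr_{A₁B₁} J′ = I_{A₀B₀}, Tr_{A₁} J′ = (1/m) • I_{A₀B₀B₁} and Tr_{B₁} J′ = (1/m) • I_{A₀A₁B₀}; in particular J′ is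 the Choi matrix of a bipartite channel satisfying the non-signalling conditions. -/
open Matrix
open scoped ComplexOrder

noncomputable section

/-- `C_{ST} = ∑ k, E_{kk} ⊗ E_{kk}`, the Choi matrix of the noiseless classical channel
on `m` messages (indexed by `Fin m × Fin m`). -/
def classChoi (m : ℕ) : Matrix (Fin m × Fin m) (Fin m × Fin m) ℂ :=
  fun x y => if x.1 = x.2 ∧ y.1 = y.2 ∧ x.1 = y.1 then 1 else 0

/-- `C = C_{A₀B₁} ⊠ C_{B₀A₁}`, the Choi matrix of the noiseless bidirectional classical
channel `Υ_m`, indexed by `A₀ × A₁ × B₀ × B₁` (all equal to `Fin m`). -/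
def upsChoi (m : ℕ) : Matrix (Fin m × Fin m × Fin m × Fin m) (Fin m × Fin m × Fin m × Fin m) ℂ :=
  fun x y =>
    classChoi m (x.1, x.2.2.2) (y.1, y.2.2.2) * classChoi m (x.2.2.1, x.2.1) (y.2.2.1, y.2.1)

/-- `J′ = (1/m) • (C_{A₀B₁} ⊠ C_{B₀A₁})
      + (1/(m(m−1))) • ((I − C)_{A₀B₁} ⊠ (I − C)_{B₀A₁})`,
indexed by `A₀ × A₁ × B₀ × B₁` (all equal to `Fin m`). -/
def Jprime (m : ℕ) : Matrix (Fin m × Fin m × Fin m × Fin m) (Fin m × Fin m × Fin m × Fin m) ℂ :=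
  fun x y =>
    (m : ℂ)⁻¹ *
      (classChoi m (x.1, x.2.2.2) (y.1, y.2.2.2) *
        classChoi m (x.2.2.1, x.2.1) (y.2.2.1, y.2.1)) +
    ((m : ℂ) * ((m : ℂ) - 1))⁻¹ *
      ((1 - classChoi m) (x.1, x.2.2.2) (y.1, y.2.2.2) *
        (1 - classChoi m) (x.2.2.1, x.2.1) (y.2.2.1, y.2.1))

/-!
The two copies of `C` in `J′` can be any Choi matrices `M` of `A₀ → B₁` and `N` of `B₀ → A₁` that
are at most `I`. Positivity is that of Kronecker products. For the marginals, `Tr_{A₁} N = I` gives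
`Tr_{A₁} (I - N) = (m - 1) • I`, and with the weights `1/m` and `1/(m(m-1))` the terms `M ⊗ I` and
`(I - M) ⊗ I` of `Tr_{A₁} J′` both get the coefficient `1/m`, so they add up to `(1/m) • I`. The
same holds for `Tr_{B₁}`, and marginals proportional to the identity are non-signalling.
-/

open scoped Kronecker

section PartialTraces

variable {A₀ A₁ B₀ B₁ : Type*}

theorem trOut_one {S T : Type*} [Fintype T] [DecidableEq S] [DecidableEq T] :
    trOut (1 : Matrix (S × T) (S × T) ℂ) = (Fintype.card T : ℂ) • 1 := by
  ext s s'
  simp [trOut, Matrix.one_apply]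

theorem trOut_sub {S T : Type*} [Fintype T] (M N : Matrix (S × T) (S × T) ℂ) :
    trOut (M - N) = trOut M - trOut N := by
  ext s s'
  simp [trOut]

theorem trOut_one_sub {S T : Type*} [Fintype T] [DecidableEq S] [DecidableEq T]
    {M : Matrix (S × T) (S × T) ℂ} (hM : trOut M = 1) :
    trOut (1 - M) = ((Fintype.card T : ℂ) - 1) • (1 : Matrix S S ℂ) := by
  rw [trOut_sub, trOut_one, hM, sub_smul, one_smul]

theorem trA1_add [Fintype A₁] (J K : Matrix (A₀ × A₁ × B₀ × B₁) (A₀ × A₁ × B₀ × B₁) ℂ) :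
    trA1 (J + K) = trA1 J + trA1 K := by
  ext x y
  simp [trA1, Finset.sum_add_distrib]

theorem trA1_smul [Fintype A₁] (c : ℂ)
    (J : Matrix (A₀ × A₁ × B₀ × B₁) (A₀ × A₁ × B₀ × B₁) ℂ) : trA1 (c • J) = c • trA1 J := by
  ext x y
  simp [trA1, Finset.mul_sum]

theorem trB1_add [Fintype B₁] (J K : Matrix (A₀ × A₁ × B₀ × B₁) (A₀ × A₁ × B₀ × B₁) ℂ) :
    trB1 (J + K) = trB1 J + trB1 K := by
  ext x y
  simp [trB1, Finset.sum_add_distrib]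

theorem trB1_smul [Fintype B₁] (c : ℂ)
    (J : Matrix (A₀ × A₁ × B₀ × B₁) (A₀ × A₁ × B₀ × B₁) ℂ) : trB1 (c • J) = c • trB1 J := by
  ext x y
  simp [trB1, Finset.mul_sum]

theorem trA1B1_eq_smul_one_of_trB1 [Fintype A₁] [Fintype B₁]
    [DecidableEq A₀] [DecidableEq A₁] [DecidableEq B₀]
    {J : Matrix (A₀ × A₁ × B₀ × B₁) (A₀ × A₁ × B₀ × B₁) ℂ} {c : ℂ} (hJ : trB1 J = c • 1) :
    trA1B1 J = ((Fintype.card A₁ : ℂ) * c) • (1 : Matrix (A₀ × B₀) (A₀ × B₀) ℂ) := by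
  ext x y
  calc trA1B1 J x y = ∑ a, trB1 J (x.1, a, x.2) (y.1, a, y.2) := rfl
    _ = (((Fintype.card A₁ : ℂ) * c) • (1 : Matrix (A₀ × B₀) (A₀ × B₀) ℂ)) x y := by
      simp [hJ, Matrix.one_apply, Prod.ext_iff]

theorem trA1_eq_piFst_of_eq_smul_one [Fintype A₀] [Fintype A₁]
    [DecidableEq A₀] [DecidableEq B₀] [DecidableEq B₁]
    {J : Matrix (A₀ × A₁ × B₀ × B₁) (A₀ × A₁ × B₀ × B₁) ℂ} {c : ℂ} (hJ : trA1 J = c • 1) :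
    trA1 J = piFst (trA0A1 J) := by
  have htr : trA0A1 J = ((Fintype.card A₀ : ℂ) * c) • 1 := by
    ext x y
    calc trA0A1 J x y = ∑ a, trA1 J (a, x) (a, y) := rfl
      _ = (((Fintype.card A₀ : ℂ) * c) • (1 : Matrix (B₀ × B₁) (B₀ × B₁) ℂ)) x y := by
        simp [hJ, Matrix.one_apply]
  ext ⟨a, x⟩ ⟨a', y⟩
  have : Nonempty A₀ := ⟨a⟩
  by_cases ha : a = a' <;> simp [hJ, htr, piFst, Matrix.one_apply, ha]

theorem trB1_eq_piB0_of_eq_smul_one [Fintype B₀] [Fintype B₁]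
    [DecidableEq A₀] [DecidableEq A₁] [DecidableEq B₀]
    {J : Matrix (A₀ × A₁ × B₀ × B₁) (A₀ × A₁ × B₀ × B₁) ℂ} {c : ℂ} (hJ : trB1 J = c • 1) :
    trB1 J = piB0 (trB0B1 J) := by
  have htr : trB0B1 J = ((Fintype.card B₀ : ℂ) * c) • 1 := by
    ext x y
    calc trB0B1 J x y = ∑ b, trB1 J (x.1, x.2, b) (y.1, y.2, b) := rfl
      _ = (((Fintype.card B₀ : ℂ) * c) • (1 : Matrix (A₀ × A₁) (A₀ × A₁) ℂ)) x y := by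
        simp [hJ, Matrix.one_apply, Prod.ext_iff]
  ext ⟨a₀, a₁, b⟩ ⟨a₀', a₁', b'⟩
  have : Nonempty B₀ := ⟨b⟩
  by_cases hb : b = b' <;> simp [hJ, htr, piB0, Matrix.one_apply, hb]

end PartialTraces

section CrossKron

variable {A₀ A₁ B₀ B₁ : Type*}

/-- `M_{A₀B₁} ⊠ N_{B₀A₁}`, reindexed to `A₀ × A₁ × B₀ × B₁`: the Choi matrix of the pair of channels
`A₀ → B₁` and `B₀ → A₁` used in parallel. -/
def crossKron (M : Matrix (A₀ × B₁) (A₀ × B₁) ℂ) (N : Matrix (B₀ × A₁) (B₀ × A₁) ℂ) :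
    Matrix (A₀ × A₁ × B₀ × B₁) (A₀ × A₁ × B₀ × B₁) ℂ :=
  (M ⊗ₖ N).submatrix (fun x => ((x.1, x.2.2.2), (x.2.2.1, x.2.1)))
    (fun x => ((x.1, x.2.2.2), (x.2.2.1, x.2.1)))

theorem crossKron_posSemidef [Finite A₀] [Finite A₁] [Finite B₀] [Finite B₁]
    {M : Matrix (A₀ × B₁) (A₀ × B₁) ℂ} {N : Matrix (B₀ × A₁) (B₀ × A₁) ℂ}
    (hM : M.PosSemidef) (hN : N.PosSemidef) : (crossKron M N).PosSemidef :=
  (hM.kronecker hN).submatrix _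

theorem trA1_crossKron [Fintype A₁]
    (M : Matrix (A₀ × B₁) (A₀ × B₁) ℂ) (N : Matrix (B₀ × A₁) (B₀ × A₁) ℂ) :
    trA1 (crossKron M N) = (M ⊗ₖ trOut N).submatrix
      (fun x => ((x.1, x.2.2), x.2.1)) (fun x => ((x.1, x.2.2), x.2.1)) := by
  ext x y
  simp [trA1, trOut, crossKron, Finset.mul_sum]

theorem trB1_crossKron [Fintype B₁]
    (M : Matrix (A₀ × B₁) (A₀ × B₁) ℂ) (N : Matrix (B₀ × A₁) (B₀ × A₁) ℂ) :
    trB1 (crossKron M N) = (trOut M ⊗ₖ N).submatrix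
      (fun x => (x.1, (x.2.2, x.2.1))) (fun x => (x.1, (x.2.2, x.2.1))) := by
  ext x y
  simp [trB1, trOut, crossKron, Finset.sum_mul]

end CrossKron

section ComplementMixture

variable {A₀ A₁ B₀ B₁ : Type*} [DecidableEq A₀] [DecidableEq A₁] [DecidableEq B₀] [DecidableEq B₁]

/-- `(1/m) • (M ⊠ N) + (1/(m(m−1))) • ((I − M) ⊠ (I − N))`: the construction of `J′` from arbitrary
Choi matrices `M` and `N` in place of the classical identity channel. At `m = 1` the second weight
is the junk value `0`. -/
def complementMixture (m : ℕ) (M : Matrix (A₀ × B₁) (A₀ × B₁) ℂ)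
    (N : Matrix (B₀ × A₁) (B₀ × A₁) ℂ) :
    Matrix (A₀ × A₁ × B₀ × B₁) (A₀ × A₁ × B₀ × B₁) ℂ :=
  (m : ℂ)⁻¹ • crossKron M N + ((m : ℂ) * ((m : ℂ) - 1))⁻¹ • crossKron (1 - M) (1 - N)

theorem complementMixture_posSemidef [Fintype A₀] [Fintype A₁] [Fintype B₀] [Fintype B₁]
    {m : ℕ} (hm : 1 ≤ m) {M : Matrix (A₀ × B₁) (A₀ × B₁) ℂ} {N : Matrix (B₀ × A₁) (B₀ × A₁) ℂ}
    (hM : M.PosSemidef) (hM1 : LoewnerLE M 1) (hN : N.PosSemidef) (hN1 : LoewnerLE N 1) :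
    (complementMixture m M N).PosSemidef := by
  have hm_sub : (0 : ℂ) ≤ (m : ℂ) - 1 := sub_nonneg.mpr (mod_cast hm)
  exact ((crossKron_posSemidef hM hN).smul (by positivity)).add
    ((crossKron_posSemidef hM1 hN1).smul (by positivity))

theorem complementMixture_weight_mul_sub_one {m : ℕ} (hm : m ≠ 1) :
    ((m : ℂ) * ((m : ℂ) - 1))⁻¹ * ((m : ℂ) - 1) = (m : ℂ)⁻¹ := by
  have hm_sub : (m : ℂ) - 1 ≠ 0 := sub_ne_zero.mpr (mod_cast hm)
  rw [mul_inv, mul_assoc, inv_mul_cancel₀ hm_sub, mul_one]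

theorem trA1_complementMixture [Fintype A₁] {m : ℕ} (hm : m ≠ 1) (hA₁ : Fintype.card A₁ = m)
    (M : Matrix (A₀ × B₁) (A₀ × B₁) ℂ) {N : Matrix (B₀ × A₁) (B₀ × A₁) ℂ} (hN : trOut N = 1) :
    trA1 (complementMixture m M N) = (m : ℂ)⁻¹ • 1 := by
  let f : A₀ × B₀ × B₁ → (A₀ × B₁) × B₀ := fun x => ((x.1, x.2.2), x.2.1)
  have hf : Function.Injective f := by
    rintro ⟨_, _, _⟩ ⟨_, _, _⟩ h
    simp_all [f]
  have hcompl : trA1 (crossKron (1 - M) (1 - N)) =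
      ((m : ℂ) - 1) • ((1 - M) ⊗ₖ (1 : Matrix B₀ B₀ ℂ)).submatrix f f := by
    rw [trA1_crossKron, trOut_one_sub hN, hA₁, kronecker_smul]
    rfl
  calc trA1 (complementMixture m M N)
      = (m : ℂ)⁻¹ • (M ⊗ₖ (1 : Matrix B₀ B₀ ℂ)).submatrix f f +
          (m : ℂ)⁻¹ • ((1 - M) ⊗ₖ (1 : Matrix B₀ B₀ ℂ)).submatrix f f := by
        rw [complementMixture, trA1_add, trA1_smul, trA1_smul, hcompl, smul_smul,
          complementMixture_weight_mul_sub_one hm, trA1_crossKron, hN]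
    _ = (m : ℂ)⁻¹ • ((M + (1 - M)) ⊗ₖ (1 : Matrix B₀ B₀ ℂ)).submatrix f f := by
        rw [← smul_add, add_kronecker]
        rfl
    _ = (m : ℂ)⁻¹ • 1 := by
        rw [add_sub_cancel, one_kronecker_one, submatrix_one f hf]

theorem trB1_complementMixture [Fintype B₁] {m : ℕ} (hm : m ≠ 1) (hB₁ : Fintype.card B₁ = m)
    {M : Matrix (A₀ × B₁) (A₀ × B₁) ℂ} (hM : trOut M = 1) (N : Matrix (B₀ × A₁) (B₀ × A₁) ℂ) :
    trB1 (complementMixture m M N) = (m : ℂ)⁻¹ • 1 := by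
  let f : A₀ × A₁ × B₀ → A₀ × (B₀ × A₁) := fun x => (x.1, (x.2.2, x.2.1))
  have hf : Function.Injective f := by
    rintro ⟨_, _, _⟩ ⟨_, _, _⟩ h
    simp_all [f]
  have hcompl : trB1 (crossKron (1 - M) (1 - N)) =
      ((m : ℂ) - 1) • ((1 : Matrix A₀ A₀ ℂ) ⊗ₖ (1 - N)).submatrix f f := by
    rw [trB1_crossKron, trOut_one_sub hM, hB₁, smul_kronecker]
    rfl
  calc trB1 (complementMixture m M N)
      = (m : ℂ)⁻¹ • ((1 : Matrix A₀ A₀ ℂ) ⊗ₖ N).submatrix f f +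
          (m : ℂ)⁻¹ • ((1 : Matrix A₀ A₀ ℂ) ⊗ₖ (1 - N)).submatrix f f := by
        rw [complementMixture, trB1_add, trB1_smul, trB1_smul, hcompl, smul_smul,
          complementMixture_weight_mul_sub_one hm, trB1_crossKron, hM]
    _ = (m : ℂ)⁻¹ • ((1 : Matrix A₀ A₀ ℂ) ⊗ₖ (N + (1 - N))).submatrix f f := by
        rw [← smul_add, kronecker_add]
        rfl
    _ = (m : ℂ)⁻¹ • 1 := by
        rw [add_sub_cancel, one_kronecker_one, submatrix_one f hf]

end ComplementMixture

section ClassicalChannel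

theorem classChoi_eq_diagonal (m : ℕ) :
    classChoi m = diagonal fun x => if x.1 = x.2 then 1 else 0 := by
  ext ⟨a, b⟩ ⟨c, d⟩
  simp only [classChoi, diagonal_apply, Prod.mk.injEq]
  grind

theorem classChoi_posSemidef (m : ℕ) : (classChoi m).PosSemidef := by
  rw [classChoi_eq_diagonal]
  refine PosSemidef.diagonal fun x => ?_
  dsimp only
  split_ifs <;> simp

theorem classChoi_loewnerLE_one (m : ℕ) : LoewnerLE (classChoi m) 1 := by
  rw [LoewnerLE, classChoi_eq_diagonal, ← diagonal_one, diagonal_sub]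
  refine PosSemidef.diagonal fun x => ?_
  dsimp only
  split_ifs <;> simp

theorem trOut_classChoi (m : ℕ) : trOut (classChoi m) = 1 := by
  ext a c
  by_cases h : a = c <;> simp [trOut, classChoi_eq_diagonal, Matrix.one_apply, h]

theorem Jprime_eq_complementMixture (m : ℕ) :
    Jprime m = complementMixture m (classChoi m) (classChoi m) :=
  rfl

end ClassicalChannel

theorem Jprime_is_ns_channel_general {A₀ A₁ B₀ B₁ : Type*}
    [Fintype A₀] [Fintype A₁] [Fintype B₀] [Fintype B₁]
    [DecidableEq A₀] [DecidableEq A₁] [DecidableEq B₀] [DecidableEq B₁]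
    {m : ℕ} (hm : 2 ≤ m) (hA₁ : Fintype.card A₁ = m) (hB₁ : Fintype.card B₁ = m)
    {M : Matrix (A₀ × B₁) (A₀ × B₁) ℂ} {N : Matrix (B₀ × A₁) (B₀ × A₁) ℂ}
    (hM : M.PosSemidef) (hM1 : LoewnerLE M 1) (hMtr : trOut M = 1)
    (hN : N.PosSemidef) (hN1 : LoewnerLE N 1) (hNtr : trOut N = 1) :
    (complementMixture m M N).PosSemidef ∧
    trA1B1 (complementMixture m M N) = 1 ∧
    trA1 (complementMixture m M N) = (m : ℝ)⁻¹ • (1 : Matrix (A₀ × B₀ × B₁) (A₀ × B₀ × B₁) ℂ) ∧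
    trB1 (complementMixture m M N) = (m : ℝ)⁻¹ • (1 : Matrix (A₀ × A₁ × B₀) (A₀ × A₁ × B₀) ℂ) ∧
    NS (complementMixture m M N) := by
  have hA := trA1_complementMixture (by lia) hA₁ M hNtr
  have hB := trB1_complementMixture (by lia) hB₁ hMtr N
  have hm0 : (m : ℂ) ≠ 0 := by norm_cast; lia
  refine ⟨complementMixture_posSemidef (by lia) hM hM1 hN hN1, ?_,
    hA.trans (inv_natCast_smul_eq ℂ ℝ m 1), hB.trans (inv_natCast_smul_eq ℂ ℝ m 1),
    trA1_eq_piFst_of_eq_smul_one hA, trB1_eq_piB0_of_eq_smul_one hB⟩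
  rw [trA1B1_eq_smul_one_of_trB1 hB, hA₁, mul_inv_cancel₀ hm0, one_smul]

/-- The channel `E′` used in the one-shot cost lower bound is a non-signalling bipartite
channel: `J′` is positive semidefinite, `Tr_{A₁B₁} J′ = I`, `Tr_{A₁} J′ = (1/m) • I` and
`Tr_{B₁} J′ = (1/m) • I`; in particular `J′` is the Choi matrix of a bipartite channel
satisfying the non-signalling conditions. -/
theorem Jprime_is_ns_channel (m : ℕ) (hm : 2 ≤ m) :
    (Jprime m).PosSemidef ∧
    trA1B1 (Jprime m) = 1 ∧
    trA1 (Jprime m) = (m : ℝ)⁻¹ • (1 : Matrix (Fin m × Fin m × Fin m) (Fin m × Fin m × Fin m) ℂ) ∧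
    trB1 (Jprime m) = (m : ℝ)⁻¹ • (1 : Matrix (Fin m × Fin m × Fin m) (Fin m × Fin m × Fin m) ℂ) ∧
    NS (Jprime m) := by
  rw [Jprime_eq_complementMixture]
  exact Jprime_is_ns_channel_general hm (Fintype.card_fin m) (Fintype.card_fin m)
    (classChoi_posSemidef m) (classChoi_loewnerLE_one m) (trOut_classChoi m)
    (classChoi_posSemidef m) (classChoi_loewnerLE_one m) (trOut_classChoi m)
end
end
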